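/- arXiv:2012.15736 — 2 statements merged into one kernel-verified Lean document; each statement's English description precedes it below -/
import Mathlib

section
/- Let k be a perfect field, let A be a reduced commutative k-algebra, and let K/k be an arbitrary field extension. Then K ⊗_k A is a reduced ring (i.e. A is geometrically reduced over k). -/
open scoped TensorProduct

lemma aux_coord {E K B L : Type*} [Field E] [Field K] [Algebra E K] [CommRing B] [Algebra E B]
    [CommRing L] [Algebra E L] (f : B →ₐ[E] L) {ι : Type*} (b : Module.Basis ι E K)
    (x : B ⊗[E] K) (i : ι) :
    (Algebra.TensorProduct.basis L b).repr (Algebra.TensorProduct.map f (AlgHom.id E K) x) i =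
      f ((Algebra.TensorProduct.basis B b).repr x i) := by
  induction x with
  | zero => simp
  | add x y hx hy => simp [hx, hy]
  | tmul a c => simp [Algebra.TensorProduct.basis_repr_tmul]

lemma aux_sep (E K B : Type*) [Field E] [Field K] [Algebra E K] [CommRing B] [Algebra E B]
    [Algebra.EssFiniteType E K] [Algebra.IsSeparable E K] [IsReduced B] :
    IsReduced (B ⊗[E] K) := by
  have : Algebra.FormallyUnramified E K := Algebra.FormallyUnramified.of_isSeparable E K
  refine ⟨fun x hx => ?_⟩
  let b := Module.Basis.ofVectorSpace E K
  refine (Algebra.TensorProduct.basis B b).ext_elem fun i => ?_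
  rw [map_zero, Finsupp.zero_apply]
  refine IsNilpotent.eq_zero (mem_nilradical.mp ?_)
  rw [nilradical_eq_sInf, Ideal.mem_sInf]
  intro p hp
  have hp : p.IsPrime := hp
  have : IsReduced (p.ResidueField ⊗[E] K) :=
    Algebra.FormallyUnramified.isReduced_of_field p.ResidueField _
  have h := aux_coord (IsScalarTower.toAlgHom E B p.ResidueField) b x i
  rw [(hx.map (Algebra.TensorProduct.map
    (IsScalarTower.toAlgHom E B p.ResidueField) (AlgHom.id E K))).eq_zero] at h
  simpa using h.symm

lemma aux_trans (k K A : Type*) [Field k] [Field K] [Algebra k K]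
    [CommRing A] [Algebra k A] [IsReduced A] (s : Set K)
    (hs : AlgebraicIndependent k ((↑) : s → K)) :
    IsReduced (A ⊗[k] IntermediateField.adjoin k s) := by
  open IntermediateField.algebraAdjoinAdjoin in
  have e : MvPolynomial s k ≃ₐ[k] Algebra.adjoin k s :=
    hs.aevalEquiv.trans (Subalgebra.equivOfEq _ _ (by simp))
  have : IsReduced (A ⊗[k] Algebra.adjoin k s) :=
    isReduced_of_injective
      (((Algebra.TensorProduct.congr (AlgEquiv.refl : A ≃ₐ[k] A) e.symm).trans
        ((MvPolynomial.algebraTensorAlgEquiv k A).restrictScalars k)))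
      (AlgEquiv.injective _)
  let := (Algebra.TensorProduct.map (AlgHom.id k A) (IsScalarTower.toAlgHom k
    (Algebra.adjoin k s) (IntermediateField.adjoin k s))).toAlgebra
  have : IsScalarTower A (A ⊗[k] Algebra.adjoin k s) (A ⊗[k] IntermediateField.adjoin k s) :=
    IsScalarTower.of_algebraMap_eq (R := A) (S := A ⊗[k] Algebra.adjoin k s)
      (A := A ⊗[k] IntermediateField.adjoin k s) fun a => by
        change a ⊗ₜ[k] (1 : IntermediateField.adjoin k s) =
          Algebra.TensorProduct.map (AlgHom.id k A) (IsScalarTower.toAlgHom k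
            (Algebra.adjoin k s) (IntermediateField.adjoin k s)) (a ⊗ₜ[k] 1)
        simp
  have := IsLocalization.tensorProduct_tensorProduct_right k A
    (nonZeroDivisors (Algebra.adjoin k s)) (IntermediateField.adjoin k s)
    (by
      ext a
      rw [RingHom.algebraMap_toAlgebra]
      simp)
  exact isReduced_localizationPreserves (Submonoid.map Algebra.TensorProduct.includeRight
    (nonZeroDivisors (Algebra.adjoin k s)))
    (A ⊗[k] IntermediateField.adjoin k s) (R := A ⊗[k] Algebra.adjoin k s) inferInstance

lemma aux_fg (k K A : Type*) [Field k] [PerfectField k] [Field K] [Algebra k K]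
    [Algebra.EssFiniteType k K]
    [CommRing A] [Algebra k A] [IsReduced A] : IsReduced (A ⊗[k] K) := by
  obtain ⟨s, hs, H⟩ := exists_isTranscendenceBasis_and_isSeparable_of_perfectField k K
  let E := IntermediateField.adjoin k (s : Set K)
  have h1 : IsReduced (A ⊗[k] E) := aux_trans k K A s hs.1
  have : Algebra.EssFiniteType E K := Algebra.EssFiniteType.of_comp k E K
  have h3 : IsReduced (E ⊗[k] A) :=
    isReduced_of_injective (Algebra.TensorProduct.comm k E A) (AlgEquiv.injective _)
  have h2 := aux_sep E K (E ⊗[k] A)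
  exact isReduced_of_injective
    ((Algebra.TensorProduct.comm k A K).trans
      (((Algebra.TensorProduct.cancelBaseChange k E E K A).symm.restrictScalars k).trans
        ((Algebra.TensorProduct.comm E K (E ⊗[k] A)).restrictScalars k)))
    (AlgEquiv.injective _)

/-- If `k` is a perfect field, `A` a reduced commutative `k`-algebra and `K/k` an arbitrary
field extension, then `K ⊗[k] A` is a reduced ring; that is, `A` is geometrically reduced
over `k`. -/
theorem tensorProduct_isReduced_of_perfectField
    (k K A : Type*) [Field k] [PerfectField k] [Field K] [Algebra k K]
    [CommRing A] [Algebra k A] [IsReduced A] :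
    IsReduced (K ⊗[k] A) := by
  suffices IsReduced (A ⊗[k] K) from
    isReduced_of_injective (Algebra.TensorProduct.comm k K A) (AlgEquiv.injective _)
  refine IsReduced.tensorProduct_of_flat_of_forall_fg fun C hC => ?_
  obtain ⟨t, rfl⟩ := hC
  let F := IntermediateField.adjoin k (t : Set K)
  have : Algebra.EssFiniteType k F :=
    IntermediateField.essFiniteType_iff.mpr ⟨t, rfl⟩
  have := aux_fg k F A
  let g : Algebra.adjoin k (t : Set K) →ₐ[k] F :=
    Subalgebra.inclusion (IntermediateField.algebra_adjoin_le_adjoin k (t : Set K))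
  exact isReduced_of_injective (Algebra.TensorProduct.map (AlgHom.id k A) g)
    (Module.Flat.lTensor_preserves_injective_linearMap g.toLinearMap
      (Subalgebra.inclusion_injective
        (IntermediateField.algebra_adjoin_le_adjoin k (t : Set K))))
end

section
/- (Cartier's theorem, affine case) Let k be a field of characteristic zero and let A be a finitely generated commutative k-algebra equipped with the structure of a Hopf algebra over k (so that Spec A is an affine group scheme of finite type over k). Then A is a reduced ring. -/
open TensorProduct in
/-- The left-invariant derivation attached to a point derivation at the identity. -/
noncomputable def cartierDer {k A : Type*} [Field k] [CommRing A] [HopfAlgebra k A]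
    (d : A →ₗ[k] k)
    (hd : ∀ a b, d (a * b) = Coalgebra.counit (R := k) a * d b + Coalgebra.counit (R := k) b * d a) :
    Derivation k A A :=
  Derivation.mk' ((TensorProduct.rid k A).toLinearMap ∘ₗ (d.lTensor A) ∘ₗ Coalgebra.comul) (by
    have key : ∀ s t : A ⊗[k] A,
        TensorProduct.rid k A (d.lTensor A (s * t)) =
          TensorProduct.rid k A ((Coalgebra.counit (R := k) (A := A)).lTensor A s) *
            TensorProduct.rid k A (d.lTensor A t) +
          TensorProduct.rid k A ((Coalgebra.counit (R := k) (A := A)).lTensor A t) *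
            TensorProduct.rid k A (d.lTensor A s) := by
      intro s t
      induction s with
      | zero => simp
      | add x y hx hy => simp only [add_mul, map_add, hx, hy, mul_add]; ring
      | tmul a b =>
        induction t with
        | zero => simp
        | add x y hx hy => simp only [add_mul, map_add, hx, hy, mul_add]; ring
        | tmul a' b' =>
          simp [hd, Algebra.smul_def]
          ring
    intro a b
    simp [key, Coalgebra.lTensor_counit_comul])

lemma cartierDer_counit {k A : Type*} [Field k] [CommRing A] [HopfAlgebra k A]
    (d : A →ₗ[k] k)
    (hd : ∀ a b, d (a * b) = Coalgebra.counit (R := k) a * d b + Coalgebra.counit (R := k) b * d a)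
    (y : A) : Coalgebra.counit (R := k) (cartierDer d hd y) = d y := by
  have key : ∀ t : TensorProduct k A A, Coalgebra.counit (R := k) (TensorProduct.rid k A (d.lTensor A t))
      = d (TensorProduct.lid k A ((Coalgebra.counit (R := k) (A := A)).rTensor A t)) := by
    intro t
    induction t with
    | zero => simp
    | add x y hx hy => simp only [map_add, hx, hy]
    | tmul a b => simp [mul_comm]
  have := key (Coalgebra.comul y)
  rw [Coalgebra.rTensor_counit_comul] at this
  simpa [cartierDer] using this

/-- Derivations preserve nilpotents in characteristic zero. -/
lemma derivation_isNilpotent {k A : Type*} [Field k] [CharZero k] [CommRing A] [Algebra k A]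
    (D : Derivation k A A) {a : A} (ha : IsNilpotent a) : IsNilpotent (D a) := by
  have key : ∀ j e : ℕ, a ^ j * (D a) ^ e = 0 → IsNilpotent (D a) := by
    intro j
    induction j with
    | zero => intro e h; exact ⟨e, by simpa using h⟩
    | succ j ih =>
      intro e h
      apply ih (e + 2)
      have h1 : D (a ^ (j + 1) * (D a) ^ e) = 0 := by rw [h, map_zero]
      rw [Derivation.leibniz, Derivation.leibniz_pow, Derivation.leibniz_pow] at h1
      simp only [smul_eq_mul, nsmul_eq_mul, Nat.add_sub_cancel] at h1
      have h3 : ((j + 1 : ℕ) : A) * (a ^ j * D a ^ (e + 2)) = 0 := by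
        rcases e with _ | e
        · have := congrArg (· * D a) h1
          simp at this ⊢
          linear_combination this
        · have := congrArg (· * D a) h1
          simp only [Nat.add_sub_cancel, zero_mul] at this
          linear_combination this - ((e + 1 : ℕ) : A) * D (D a) * h
      have h4 : ((j + 1 : ℕ) : k) • (a ^ j * D a ^ (e + 2)) = 0 := by
        rw [Algebra.smul_def, map_natCast]; exact h3
      exact (smul_eq_zero.mp h4).resolve_left (by exact_mod_cast Nat.succ_ne_zero j)
  obtain ⟨n, hn⟩ := ha
  exact key n 0 (by simp [hn])

lemma euler_pow {k A : Type*} [Field k] [CommRing A] [Algebra k A]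
    (E : Derivation k A A) (I : Ideal A) (hE : ∀ y ∈ I, E y - y ∈ I ^ 2) (m : ℕ) :
    ∀ y ∈ I ^ (m + 1), E y - ((m + 1 : ℕ) : A) * y ∈ I ^ (m + 2) := by
  induction m with
  | zero => intro y hy; simpa using hE y (by simpa using hy)
  | succ m ih =>
    intro y hy
    rw [pow_succ] at hy
    refine Submodule.mul_induction_on hy ?_ ?_
    · intro a ha b hb
      have h1 : a * (E b - b) ∈ I ^ (m + 1 + 2) := by
        rw [pow_add I (m + 1) 2]; exact Ideal.mul_mem_mul ha (hE b hb)
      have h2 : (E a - ((m + 1 : ℕ) : A) * a) * b ∈ I ^ (m + 1 + 2) := by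
        rw [show m + 1 + 2 = (m + 2) + 1 by ring, pow_succ]; exact Ideal.mul_mem_mul (ih a ha) hb
      convert add_mem h1 h2 using 1
      rw [Derivation.leibniz]
      simp only [smul_eq_mul]
      push_cast
      ring
    · intro x y hx hy
      convert add_mem hx hy using 1
      rw [map_add]; ring

lemma exists_coords {k A : Type*} [Field k] [CommRing A] [IsNoetherianRing A] [Algebra k A]
    (ε : A →ₐ[k] k) :
    ∃ (n : ℕ) (u : Fin n → A) (d : Fin n → A →ₗ[k] k), (∀ i, u i ∈ RingHom.ker ε) ∧
      (∀ i a b, d i (a * b) = ε a * d i b + ε b * d i a) ∧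
      ∀ y ∈ RingHom.ker ε, y - ∑ i, d i y • u i ∈ (RingHom.ker ε) ^ 2 := by
  set I : Ideal A := RingHom.ker ε with hI
  have hmem : ∀ a, a - algebraMap k A (ε a) ∈ I := by
    intro a; simp [hI, RingHom.mem_ker]
  have hsm : ∀ (a : A) (x : I.Cotangent), a • x = ε a • x := by
    intro a x
    have := Ideal.Cotangent.smul_eq_zero_of_mem (hmem a) x
    rw [sub_smul, sub_eq_zero] at this
    rw [this, algebraMap_smul]
  have hfin : Module.Finite k I.Cotangent := by
    obtain ⟨s, hs⟩ := (Module.Finite.of_surjective I.toCotangent I.toCotangent_surjective).fg_top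
    refine ⟨⟨s, ?_⟩⟩
    rw [eq_top_iff]
    intro x _
    have hx : x ∈ Submodule.span A (s : Set I.Cotangent) := by rw [hs]; trivial
    induction hx using Submodule.span_induction with
    | mem x h => exact Submodule.subset_span h
    | zero => exact zero_mem _
    | add x y _ _ hx hy => exact add_mem (hx trivial) (hy trivial)
    | smul a x _ hx => rw [hsm]; exact Submodule.smul_mem _ _ (hx trivial)
  let b := Module.finBasis k I.Cotangent
  choose u hu using fun i => I.toCotangent_surjective (b i)
  let p : A →ₗ[k] I.Cotangent :=
    { toFun := fun a => I.toCotangent ⟨a - algebraMap k A (ε a), hmem a⟩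
      map_add' := by
        intro x y
        rw [← map_add]; congr 1; ext; simp; ring
      map_smul' := by
        intro c x
        rw [RingHom.id_apply, ← algebraMap_smul A c (I.toCotangent _), ← map_smul]; congr 1; ext
        simp [Algebra.smul_def]; ring }
  have hp : ∀ x y, p (x * y) = ε x • p y + ε y • p x := by
    intro x y
    rw [← hsm, ← hsm]
    change I.toCotangent _ = x • I.toCotangent _ + y • I.toCotangent _
    rw [← map_smul, ← map_smul, ← map_add, Ideal.toCotangent_eq]
    have := Ideal.mul_mem_mul (hmem x) (hmem y)
    rw [← pow_two] at this
    convert neg_mem this using 1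
    simp
    ring
  refine ⟨_, fun i => (u i : A), fun i => b.coord i ∘ₗ p, fun i => (u i).2, ?_, ?_⟩
  · intro i x y
    simp [hp]
  · intro y hy
    have hy0 : ε y = 0 := hy
    have h2 : ∑ i, (b.coord i (p y)) • (u i : A) ∈ I :=
      Ideal.sum_mem _ fun i _ => by
        rw [Algebra.smul_def]; exact I.mul_mem_left _ (u i).2
    have : I.toCotangent ⟨y, hy⟩ = I.toCotangent ⟨_, h2⟩ := by
      have e1 : I.toCotangent ⟨y, hy⟩ = p y := by
        change _ = I.toCotangent _
        congr 1; ext; simp [hy0]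
      have e2 : (⟨_, h2⟩ : I) = ∑ i, (algebraMap k A (b.coord i (p y))) • u i := by
        ext; simp [Algebra.smul_def]
      rw [e1, e2, map_sum]
      refine (b.sum_repr (p y)).symm.trans (Finset.sum_congr rfl fun i _ => ?_)
      rw [map_smul, hu, algebraMap_smul, b.coord_apply]
    exact (Ideal.toCotangent_eq (I := I)).mp this

/-- Nilpotents lie in all powers of the augmentation ideal. -/
lemma nilpotent_mem_pow {k A : Type*} [Field k] [CharZero k] [CommRing A] [IsNoetherianRing A]
    [HopfAlgebra k A] (m : ℕ) : ∀ a : A, IsNilpotent a →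
      a ∈ (RingHom.ker (Bialgebra.counitAlgHom k A)) ^ (m + 1) := by
  obtain ⟨n, u, d, hu, hd, hy⟩ := exists_coords (Bialgebra.counitAlgHom k A)
  set I : Ideal A := RingHom.ker (Bialgebra.counitAlgHom k A) with hI
  let D : Fin n → Derivation k A A := fun i => cartierDer (d i) (hd i)
  let E : Derivation k A A := ∑ i, u i • D i
  have hEa : ∀ a, E a = ∑ i, u i * D i a := by
    intro a
    have : ∀ s : Finset (Fin n), (∑ i ∈ s, u i • D i) a = ∑ i ∈ s, u i * D i a := by
      intro s
      induction s using Finset.induction_on with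
      | empty => simp
      | insert i s hi ih => rw [Finset.sum_insert hi, Finset.sum_insert hi, ← ih]; rfl
    exact this _
  have hE : ∀ y ∈ I, E y - y ∈ I ^ 2 := by
    intro y hyI
    have h1 : ∑ i, u i * (D i y - algebraMap k A (d i y)) ∈ I ^ 2 := by
      refine Ideal.sum_mem _ fun i _ => ?_
      rw [pow_two]
      refine Ideal.mul_mem_mul (hu i) ?_
      have := cartierDer_counit (d i) (hd i) y
      simp [hI, RingHom.mem_ker, D, this]
    convert sub_mem h1 (hy y hyI) using 1
    rw [hEa]
    have e : ∑ i, u i * (D i y - algebraMap k A (d i y)) =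
        ∑ i, u i * D i y - ∑ i, d i y • u i := by
      rw [← Finset.sum_sub_distrib]
      refine Finset.sum_congr rfl fun i _ => ?_
      rw [Algebra.smul_def]; ring
    rw [e]
    ring
  induction m with
  | zero =>
    intro a ha
    rw [zero_add, pow_one]
    exact (ha.map (Bialgebra.counitAlgHom k A)).eq_zero
  | succ m ih =>
    intro a ha
    have h1 : E a ∈ I ^ (m + 2) := by
      rw [hEa]
      refine Ideal.sum_mem _ fun i _ => ?_
      rw [show m + 2 = (m + 1) + 1 by ring, pow_succ']
      exact Ideal.mul_mem_mul (hu i) (ih _ (derivation_isNilpotent (D i) ha))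
    have h2 := sub_mem h1 (euler_pow E I hE m a (ih a ha))
    rw [sub_sub_cancel] at h2
    have h3 := (I ^ (m + 2)).mul_mem_left (algebraMap k A (((m + 1 : ℕ) : k)⁻¹)) h2
    rwa [← mul_assoc, ← map_natCast (algebraMap k A), ← map_mul, inv_mul_cancel₀
      (by exact_mod_cast Nat.succ_ne_zero m), map_one, one_mul] at h3

open WithConv in
/-- Translation by a rational point. -/
lemma exists_translation {k A : Type*} [Field k] [CommRing A] [HopfAlgebra k A] (g : A →ₐ[k] k) :
    ∃ f f' : A →ₐ[k] A, (∀ a, f' (f a) = a) ∧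
      ∀ a, g (f' a) = Bialgebra.counitAlgHom k A a := by
  let G : A →ₐ[k] A := (Algebra.ofId k A).comp g
  let f := toConv G * toConv (AlgHom.id k A)
  let f' := (toConv G)⁻¹ * toConv (AlgHom.id k A)
  have hfix : ∀ h : A →ₐ[k] A, h.comp G = G := by
    intro h; ext a; simp [G, Algebra.ofId_apply]
  refine ⟨f.ofConv, f'.ofConv, ?_, ?_⟩
  · intro a
    have h : f'.ofConv.comp f.ofConv = AlgHom.id k A := by
      rw [AlgHom.comp_convMul_distrib]
      simp only [ofConv_toConv, hfix, AlgHom.comp_id, toConv_ofConv]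
      simp [f']
    exact DFunLike.congr_fun h a
  · intro a
    have h : g.comp f'.ofConv = Bialgebra.counitAlgHom k A := by
      rw [AlgHom.comp_convMul_distrib]
      have : toConv (g.comp ((toConv G)⁻¹).ofConv) = (toConv g)⁻¹ := by
        apply WithConv.ofConv_injective
        ext a
        change g (algebraMap k A (g _)) = g _
        simp
      rw [this]
      simp only [ofConv_toConv, AlgHom.comp_id, inv_mul_cancel]
      ext a
      rfl
    exact DFunLike.congr_fun h a

lemma cartier_algClosed {k A : Type*} [Field k] [CharZero k] [IsAlgClosed k] [CommRing A]
    [HopfAlgebra k A] [Algebra.FiniteType k A] : IsReduced A := by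
  have hN : IsNoetherianRing A := Algebra.FiniteType.isNoetherianRing k A
  refine ⟨fun a ha => ?_⟩
  by_contra hne
  have hann : Ideal.span {a} ≠ ⊥ := by simpa using hne
  let J : Ideal A := LinearMap.ker (LinearMap.toSpanSingleton A A a)
  have hJ : J ≠ ⊤ := by
    intro h
    have : (1 : A) ∈ J := by rw [h]; trivial
    exact hne (by simpa [J] using this)
  obtain ⟨M, hM, hJM⟩ := Ideal.exists_le_maximal J hJ
  letI := Ideal.Quotient.field M
  have : Module.Finite k (A ⧸ M) := finite_of_finite_type_of_isJacobsonRing k (A ⧸ M)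
  let l : (A ⧸ M) →ₐ[k] k := IsAlgClosed.lift
  let g : A →ₐ[k] k := l.comp (Ideal.Quotient.mkₐ k M)
  have hg : ∀ x, g x = 0 → x ∈ M := by
    intro x hx
    have : Ideal.Quotient.mk M x = 0 := l.toRingHom.injective (by simpa [g] using hx)
    exact Ideal.Quotient.eq_zero_iff_mem.mp this
  obtain ⟨f, f', hff, hgf⟩ := exists_translation g
  have hle : (RingHom.ker (Bialgebra.counitAlgHom k A)).map f' ≤ M := by
    rw [Ideal.map_le_iff_le_comap]
    intro x hx
    exact hg _ ((hgf x).trans hx)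
  have hpow : ∀ m : ℕ, a ∈ M ^ m := by
    intro m
    refine Ideal.pow_le_pow_right (Nat.le_succ m) ?_
    have h1 := nilpotent_mem_pow (k := k) m (f a) (ha.map f)
    have h2 := Ideal.mem_map_of_mem f' h1
    rw [hff, Ideal.map_pow] at h2
    exact Ideal.pow_right_mono hle _ h2
  have h := (Ideal.mem_iInf_smul_pow_eq_bot_iff M a).mp (by
    simpa [Submodule.mem_iInf] using hpow)
  obtain ⟨r, hr⟩ := h
  have h1 : 1 - (r : A) ∈ J := by
    have : (r : A) * a = a := hr
    simp [J, sub_mul, this]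
  exact hM.ne_top ((Ideal.eq_top_iff_one M).mpr (by
    simpa using add_mem (hJM h1) r.2))

/-- (Cartier's theorem, affine case) Let `k` be a field of characteristic zero and let `A` be
a finitely generated commutative `k`-algebra carrying the structure of a Hopf algebra over
`k` (so `Spec A` is an affine group scheme of finite type over `k`).  Then `A` is reduced. -/
theorem cartier_hopfAlgebra_isReduced
    (k A : Type*) [Field k] [CharZero k] [CommRing A] [HopfAlgebra k A]
    (hA : Algebra.FiniteType k A) :
    IsReduced A := by
  have : CharZero (AlgebraicClosure k) := charZero_of_injective_algebraMap
    (algebraMap k (AlgebraicClosure k)).injective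
  have h : IsReduced (TensorProduct k (AlgebraicClosure k) A) :=
    cartier_algClosed (k := AlgebraicClosure k)
  exact isReduced_of_injective
    (Algebra.TensorProduct.includeRight : A →ₐ[k] TensorProduct k (AlgebraicClosure k) A)
    (Algebra.TensorProduct.includeRight_injective (algebraMap k (AlgebraicClosure k)).injective)
end
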